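/- Let B be an additive category and K(B) its homotopy category of (cohomological) complexes. Let K(B)^{≥0} (respectively K(B)^{≤0}) denote the class of complexes homotopy equivalent to complexes concentrated in degrees ≥ 0 (respectively ≤ 0). Then the pair (K(B)_{w≤0}, K(B)_{w≥0}) := (K(B)^{≥0}, K(B)^{≤0}) is a weight structure on K(B) (the 'stupid' weight structure). -/

import Mathlib

open CategoryTheory CategoryTheory.Limits CategoryTheory.Pretriangulated

universe v u v₂ u₂

/-- `X` is a retract of `Y`: the identity of `X` factors through `Y`. -/
def IsRetract {C : Type u} [Category.{v} C] (X Y : C) : Prop :=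
  ∃ (i : X ⟶ Y) (r : Y ⟶ X), i ≫ r = 𝟙 X

variable (C : Type u) [Category.{v} C] [HasZeroObject C] [Preadditive C] [HasShift C ℤ]
  [∀ n : ℤ, (shiftFunctor C n).Additive] [Pretriangulated C]

/-- A weight structure on a triangulated category `C`, given by the classes
`LE = C_{w≤0}` and `GE = C_{w≥0}`. -/
structure WeightStructure where
  LE : Set C
  GE : Set C
  retract_mem_LE : ∀ ⦃X Y : C⦄, IsRetract X Y → Y ∈ LE → X ∈ LE
  retract_mem_GE : ∀ ⦃X Y : C⦄, IsRetract X Y → Y ∈ GE → X ∈ GE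
  shift_LE : ∀ X ∈ LE, X⟦(-1 : ℤ)⟧ ∈ LE
  shift_GE : ∀ X ∈ GE, X⟦(1 : ℤ)⟧ ∈ GE
  orthogonal : ∀ ⦃X Y : C⦄, X ∈ LE → Y ∈ GE → ∀ f : X ⟶ Y⟦(1 : ℤ)⟧, f = 0
  exists_decomp : ∀ M : C, ∃ (B A : C) (f : B ⟶ M) (g : M ⟶ A) (h : A ⟶ B⟦(1 : ℤ)⟧),
    (Triangle.mk f g h ∈ distTriang C) ∧ B ∈ LE ∧ A⟦(-1 : ℤ)⟧ ∈ GE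

namespace WeightStructure

variable {C}

/-- `C_{w≤n} = C_{w≤0}[n]`. -/
def le (w : WeightStructure C) (n : ℤ) : Set C := {X : C | X⟦(-n)⟧ ∈ w.LE}

/-- `C_{w≥n} = C_{w≥0}[n]`. -/
def ge (w : WeightStructure C) (n : ℤ) : Set C := {X : C | X⟦(-n)⟧ ∈ w.GE}

/-- `C_{w=n} = C_{w≤n} ∩ C_{w≥n}`. -/
def heart (w : WeightStructure C) (n : ℤ) : Set C := w.le n ∩ w.ge n

end WeightStructure

variable {C}

/-- The envelope of a class `D`: the smallest class containing `D` and all zero objects that is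
closed under extensions and retracts. -/
inductive Envelope (D : Set C) : C → Prop
  | of (X : C) (hX : X ∈ D) : Envelope D X
  | zero (Z : C) (hZ : IsZero Z) : Envelope D Z
  | ext (T : Triangle C) (hT : T ∈ distTriang C)
      (h₁ : Envelope D T.obj₁) (h₃ : Envelope D T.obj₃) : Envelope D T.obj₂
  | retract (X Y : C) (h : IsRetract X Y) (hY : Envelope D Y) : Envelope D X

namespace StupidWeight

open HomologicalComplex (single mkHomToSingle mkHomFromSingle single_map_f_self)

section

set_option linter.unusedSectionVars false

open ZeroObject

variable {B : Type u₂} [Category.{v₂} B] [Preadditive B] [HasZeroObject B]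

open Classical in
/-- The object in degree `n` of the truncation of `K` to degrees satisfying `p`. -/
noncomputable def tX (K : CochainComplex B ℤ) (p : ℤ → Prop) (n : ℤ) : B :=
  if p n then K.X n else 0

open Classical in
noncomputable def tι (K : CochainComplex B ℤ) (p : ℤ → Prop) (n : ℤ) : tX K p n ⟶ K.X n :=
  if h : p n then eqToHom (if_pos h) else 0

open Classical in
noncomputable def tπ (K : CochainComplex B ℤ) (p : ℤ → Prop) (n : ℤ) : K.X n ⟶ tX K p n :=
  if h : p n then eqToHom (if_pos h).symm else 0

lemma isZero_tX (K : CochainComplex B ℤ) (p : ℤ → Prop) (n : ℤ) (h : ¬ p n) :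
    IsZero (tX K p n) := by
  unfold tX
  rw [if_neg h]
  exact isZero_zero _

lemma tι_tπ (K : CochainComplex B ℤ) (p : ℤ → Prop) (n : ℤ) :
    tι K p n ≫ tπ K p n = 𝟙 _ := by
  by_cases h : p n
  · simp only [tι, tπ, h, dite_true]
    exact eqToHom_trans _ _
  · exact (isZero_tX K p n h).eq_of_src _ _

lemma tπ_tι (K : CochainComplex B ℤ) (p : ℤ → Prop) (n : ℤ) (h : p n) :
    tπ K p n ≫ tι K p n = 𝟙 _ := by
  simp only [tι, tπ, h, dite_true]
  exact eqToHom_trans _ _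

lemma tι_tπ_assoc (K : CochainComplex B ℤ) (p : ℤ → Prop) (n : ℤ) {Z : B} (h : tX K p n ⟶ Z) :
    tι K p n ≫ tπ K p n ≫ h = h := by
  rw [← Category.assoc, tι_tπ, Category.id_comp]

lemma tπ_tι_assoc (K : CochainComplex B ℤ) (p : ℤ → Prop) (n : ℤ) (h : p n) {Z : B}
    (g : K.X n ⟶ Z) : tπ K p n ≫ tι K p n ≫ g = g := by
  rw [← Category.assoc, tπ_tι K p n h, Category.id_comp]

lemma tπ_zero (K : CochainComplex B ℤ) (p : ℤ → Prop) (n : ℤ) (h : ¬ p n) :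
    tπ K p n = 0 := (isZero_tX K p n h).eq_of_tgt _ _

lemma tι_zero (K : CochainComplex B ℤ) (p : ℤ → Prop) (n : ℤ) (h : ¬ p n) :
    tι K p n = 0 := (isZero_tX K p n h).eq_of_src _ _

/-- The stupid truncation. -/
noncomputable def tr (K : CochainComplex B ℤ) (p : ℤ → Prop) : CochainComplex B ℤ where
  X := tX K p
  d i j := tι K p i ≫ K.d i j ≫ tπ K p j
  shape i j h := by simp [K.shape i j h]
  d_comp_d' i j k _ _ := by
    by_cases h : p j
    · simp [tπ_tι_assoc _ _ _ h]
    · simp [tπ_zero _ _ _ h]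

lemma isZero_tr (K : CochainComplex B ℤ) (p : ℤ → Prop) (n : ℤ) (h : ¬ p n) :
    IsZero ((tr K p).X n) := isZero_tX K p n h

/-- The inclusion of a truncation. -/
noncomputable def trι (K : CochainComplex B ℤ) (p : ℤ → Prop) (hp : ∀ i, p i → p (i + 1)) :
    tr K p ⟶ K where
  f n := tι K p n
  comm' i j hij := by
    obtain rfl : i + 1 = j := hij
    by_cases h : p i
    · simp [tr, tπ_tι _ _ _ (hp i h)]
    · exact (isZero_tX K p i h).eq_of_src _ _

/-- The projection onto a truncation. -/
noncomputable def trπ (K : CochainComplex B ℤ) (p : ℤ → Prop) (hp : ∀ i, p (i + 1) → p i) :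
    K ⟶ tr K p where
  f n := tπ K p n
  comm' i j hij := by
    obtain rfl : i + 1 = j := hij
    by_cases h : p (i + 1)
    · simp [tr, tπ_tι_assoc _ _ _ (hp i h)]
    · exact (isZero_tX K p _ h).eq_of_tgt _ _

/-- The degreewise split sequence. -/
noncomputable def trS (K : CochainComplex B ℤ) (p : ℤ → Prop) (hp : ∀ i, p i → p (i + 1)) :
    ShortComplex (CochainComplex B ℤ) :=
  ShortComplex.mk (trι K p hp) (trπ K (fun n => ¬ p n) (fun i h h' => h (hp i h'))) (by
    ext n
    by_cases h : p n
    · exact (isZero_tX K (fun n => ¬ p n) n (not_not.2 h)).eq_of_tgt _ _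
    · exact (isZero_tX K p n h).eq_of_src _ _)

noncomputable def trσ (K : CochainComplex B ℤ) (p : ℤ → Prop) (hp : ∀ i, p i → p (i + 1)) (n : ℤ) :
    ((trS K p hp).map (HomologicalComplex.eval B _ n)).Splitting where
  r := tπ K p n
  s := tι K (fun n => ¬ p n) n
  f_r := tι_tπ K p n
  s_g := tι_tπ K (fun n => ¬ p n) n
  id := by
    change tπ K p n ≫ tι K p n + tπ K (fun n => ¬ p n) n ≫ tι K (fun n => ¬ p n) n = 𝟙 _
    by_cases h : p n
    · rw [tπ_tι _ _ _ h, tπ_zero _ _ _ (not_not.2 h)]; simp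
    · rw [tπ_zero _ _ _ h, tπ_tι K (fun n => ¬ p n) n h]; simp

/-- The periodic complex with differentials `g` (even degrees) and `1 - g` (odd degrees). -/
def per {A : B} (g g' : A ⟶ A) (h : g ≫ g' = 0) (h' : g' ≫ g = 0) : CochainComplex B ℤ where
  X _ := A
  d i j := if i + 1 = j then (if Even i then g else g') else 0
  shape i j hij := if_neg hij
  d_comp_d' i j k hij hjk := by
    obtain rfl : i + 1 = j := hij
    obtain rfl : i + 1 + 1 = k := hjk
    rcases Int.even_or_odd i with hi | hi
    · simp [hi, h, Int.not_odd_iff_even.2 hi]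
    · simp [hi, h', Int.not_even_iff_odd.2 hi]

abbrev Q (K : CochainComplex B ℤ) : HomotopyCategory B (ComplexShape.up ℤ) :=
  (HomotopyCategory.quotient B (ComplexShape.up ℤ)).obj K

abbrev Qm {K L : CochainComplex B ℤ} (f : K ⟶ L) : Q K ⟶ Q L :=
  (HomotopyCategory.quotient B (ComplexShape.up ℤ)).map f

/-- Iso to a complex vanishing in degrees `< a`. -/
def Lo (a : ℤ) (X : HomotopyCategory B (ComplexShape.up ℤ)) : Prop :=
  ∃ Y : CochainComplex B ℤ, (∀ n : ℤ, n < a → IsZero (Y.X n)) ∧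
    Nonempty (X ≅ (HomotopyCategory.quotient B (ComplexShape.up ℤ)).obj Y)

/-- Iso to a complex vanishing in degrees `> a`. -/
def Hi (a : ℤ) (X : HomotopyCategory B (ComplexShape.up ℤ)) : Prop :=
  ∃ Y : CochainComplex B ℤ, (∀ n : ℤ, a < n → IsZero (Y.X n)) ∧
    Nonempty (X ≅ (HomotopyCategory.quotient B (ComplexShape.up ℤ)).obj Y)

lemma Lo.of_iso {a : ℤ} {X X' : HomotopyCategory B (ComplexShape.up ℤ)} (h : Lo a X)
    (e : X' ≅ X) : Lo a X' := by
  obtain ⟨Y, hY, ⟨e'⟩⟩ := h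
  exact ⟨Y, hY, ⟨e ≪≫ e'⟩⟩

lemma Hi.of_iso {a : ℤ} {X X' : HomotopyCategory B (ComplexShape.up ℤ)} (h : Hi a X)
    (e : X' ≅ X) : Hi a X' := by
  obtain ⟨Y, hY, ⟨e'⟩⟩ := h
  exact ⟨Y, hY, ⟨e ≪≫ e'⟩⟩

lemma Lo.mono {a b : ℤ} {X : HomotopyCategory B (ComplexShape.up ℤ)} (h : Lo a X)
    (hab : b ≤ a) : Lo b X := by
  obtain ⟨Y, hY, e⟩ := h
  exact ⟨Y, fun n hn => hY n (by lia), e⟩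

lemma Hi.mono {a b : ℤ} {X : HomotopyCategory B (ComplexShape.up ℤ)} (h : Hi a X)
    (hab : a ≤ b) : Hi b X := by
  obtain ⟨Y, hY, e⟩ := h
  exact ⟨Y, fun n hn => hY n (by lia), e⟩

lemma Lo.shift {a : ℤ} {X : HomotopyCategory B (ComplexShape.up ℤ)} (h : Lo a X) (k b : ℤ)
    (hb : b + k = a) : Lo b (X⟦k⟧) := by
  obtain ⟨Y, hY, ⟨e⟩⟩ := h
  exact ⟨Y⟦k⟧, fun n hn => hY (n + k) (by lia), ⟨(shiftFunctor _ k).mapIso e ≪≫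
    (((HomotopyCategory.quotient B (ComplexShape.up ℤ)).commShiftIso k).app Y).symm⟩⟩

lemma Hi.shift {a : ℤ} {X : HomotopyCategory B (ComplexShape.up ℤ)} (h : Hi a X) (k b : ℤ)
    (hb : b + k = a) : Hi b (X⟦k⟧) := by
  obtain ⟨Y, hY, ⟨e⟩⟩ := h
  exact ⟨Y⟦k⟧, fun n hn => hY (n + k) (by lia), ⟨(shiftFunctor _ k).mapIso e ≪≫
    (((HomotopyCategory.quotient B (ComplexShape.up ℤ)).commShiftIso k).app Y).symm⟩⟩

lemma orth {a b : ℤ} (hab : b < a) {X Y : HomotopyCategory B (ComplexShape.up ℤ)}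
    (hX : Lo a X) (hY : Hi b Y) (f : X ⟶ Y) : f = 0 := by
  obtain ⟨X', hX', ⟨e⟩⟩ := hX
  obtain ⟨Y', hY', ⟨e'⟩⟩ := hY
  obtain ⟨g, hg⟩ := (HomotopyCategory.quotient B (ComplexShape.up ℤ)).map_surjective
    (e.inv ≫ f ≫ e'.hom)
  have : g = 0 := by
    ext n
    by_cases h : n < a
    · exact (hX' n h).eq_of_src _ _
    · exact (hY' n (by lia)).eq_of_tgt _ _
  subst this
  rw [Functor.map_zero] at hg
  rw [← cancel_epi e.inv, ← cancel_mono e'.hom]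
  simpa using hg.symm

/-- Maps from degrees `≥ 0` to degrees `≤ 0` factor through an object of `B`. -/
lemma factor {X Y : HomotopyCategory B (ComplexShape.up ℤ)}
    (hX : Lo 0 X) (hY : Hi 0 Y) (f : X ⟶ Y) :
    ∃ (A : B) (i : X ⟶ Q ((single B (ComplexShape.up ℤ) 0).obj A))
      (r : Q ((single B (ComplexShape.up ℤ) 0).obj A) ⟶ Y), f = i ≫ r := by
  obtain ⟨X', hX', ⟨e⟩⟩ := hX
  obtain ⟨Y', hY', ⟨e'⟩⟩ := hY
  obtain ⟨g, hg⟩ := (HomotopyCategory.quotient B (ComplexShape.up ℤ)).map_surjective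
    (e.inv ≫ f ≫ e'.hom)
  let i : X' ⟶ (single B (ComplexShape.up ℤ) 0).obj (X'.X 0) := mkHomToSingle (𝟙 _) (by
    rintro k hk
    have hk' : k + 1 = 0 := hk
    exact (hX' k (by lia)).eq_of_src _ _)
  let r : (single B (ComplexShape.up ℤ) 0).obj (X'.X 0) ⟶ Y' := mkHomFromSingle (g.f 0) (by
    rintro k hk
    have hk' : 0 + 1 = k := hk
    exact (hY' k (by lia)).eq_of_tgt _ _)
  have hir : i ≫ r = g := by
    ext n
    rcases lt_trichotomy n 0 with h | rfl | h
    · exact (hX' n h).eq_of_src _ _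
    · simp [i, r]
    · exact (hY' n h).eq_of_tgt _ _
  refine ⟨X'.X 0, e.hom ≫ Qm i, Qm r ≫ e'.inv, ?_⟩
  rw [← cancel_epi e.inv, ← cancel_mono e'.hom]
  simp only [Category.assoc, Iso.inv_hom_id_assoc, Iso.inv_hom_id, Category.comp_id]
  rw [← Functor.map_comp, hir, ← hg]

lemma single_faithful {A : B} (f g : A ⟶ A)
    (h : Qm ((single B (ComplexShape.up ℤ) 0).map f) =
      Qm ((single B (ComplexShape.up ℤ) 0).map g)) : f = g := by
  have H := (HomotopyCategory.homotopyOfEq _ _ h).comm 0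
  rw [dNext_eq _ (show (ComplexShape.up ℤ).Rel 0 1 by simp),
    prevD_eq _ (show (ComplexShape.up ℤ).Rel (-1) 0 by simp)] at H
  simpa [single_map_f_self] using H

/-- If an idempotent splits through `j`, `k` then the splitting is iso to any other. -/
lemma iso_of_split {D : Type*} [Category D] {A W L : D} (i : W ⟶ A) (r : A ⟶ W) (h : i ≫ r = 𝟙 W)
    (j : A ⟶ L) (k : L ⟶ A) (hkj : k ≫ j = 𝟙 L) (hjk : j ≫ k = r ≫ i) : Nonempty (W ≅ L) := by
  refine ⟨⟨i ≫ j, k ≫ r, ?_, ?_⟩⟩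
  · simp only [Category.assoc]
    rw [reassoc_of% hjk, h, Category.comp_id, h]
  · simp only [Category.assoc]
    rw [← reassoc_of% hjk, hkj, Category.comp_id, hkj]

/-- The key splitting statement in nonnegative degrees. -/
lemma split_Lo_aux (K : CochainComplex B ℤ) (f : K.X 0 ⟶ K.X 0) (s : ∀ i j, K.X i ⟶ K.X j)
    (hs : ∀ i j, j + 1 ≠ i → s i j = 0)
    (h : ∀ i, K.d i (i + 1) ≫ s (i + 1) i + s i (i - 1) ≫ K.d (i - 1) i = 𝟙 _)
    (h0 : K.d 0 (0 + 1) ≫ s (0 + 1) 0 = 𝟙 _ - f) (hf : f ≫ K.d 0 (0 + 1) = 0) :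
    ∃ (L : CochainComplex B ℤ) (_ : ∀ n : ℤ, n < 0 → IsZero (L.X n))
      (j : Q ((single B (ComplexShape.up ℤ) 0).obj (K.X 0)) ⟶ Q L)
      (k : Q L ⟶ Q ((single B (ComplexShape.up ℤ) 0).obj (K.X 0))), k ≫ j = 𝟙 _ ∧
        j ≫ k = Qm ((single B (ComplexShape.up ℤ) 0).map f) := by
  let p : ℤ → Prop := fun n => 0 ≤ n
  let j : (single B (ComplexShape.up ℤ) 0).obj (K.X 0) ⟶ tr K p :=
    mkHomFromSingle (f ≫ tπ K p 0) (by
      rintro k hk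
      obtain rfl : 0 + 1 = k := hk
      change (f ≫ tπ K p 0) ≫ tι K p 0 ≫ K.d 0 (0 + 1) ≫ tπ K p (0 + 1) = 0
      rw [Category.assoc, tπ_tι_assoc K p 0 le_rfl, reassoc_of% hf, zero_comp])
  let k : tr K p ⟶ (single B (ComplexShape.up ℤ) 0).obj (K.X 0) :=
    mkHomToSingle (tι K p 0) (by
      rintro k hk
      have hk' : k + 1 = 0 := hk
      exact (isZero_tr K p k (by simp [p]; lia)).eq_of_src _ _)
  let m : ∀ i, tX K p i ⟶ tX K p i := fun i => k.f i ≫ j.f i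
  let S := (single B (ComplexShape.up ℤ) 0).obj (K.X 0)
  let σ : S.X 0 ≅ K.X 0 := HomologicalComplex.singleObjXSelf _ _ _
  have e0 : ∀ (a : tX K p 0 ⟶ S.X 0) (b : S.X 0 ⟶ tX K p 0), a = tι K p 0 ≫ σ.inv →
      b = σ.hom ≫ (f ≫ tπ K p 0) → a ≫ b = tι K p 0 ≫ f ≫ tπ K p 0 := by
    rintro a b rfl rfl
    simp
  have e1 : ∀ (a : tX K p 0 ⟶ S.X 0) (b : S.X 0 ⟶ tX K p 0), a = tι K p 0 ≫ σ.inv →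
      b = σ.hom ≫ (f ≫ tπ K p 0) → b ≫ a = σ.hom ≫ f ≫ σ.inv := by
    rintro a b rfl rfl
    simp [tπ_tι_assoc K p 0 le_rfl]
  have hk : k.f 0 = tι K p 0 ≫ σ.inv := HomologicalComplex.mkHomToSingle_f _ _
  have hj : j.f 0 = σ.hom ≫ (f ≫ tπ K p 0) := HomologicalComplex.mkHomFromSingle_f _ _
  have hm0 : m 0 = tι K p 0 ≫ f ≫ tπ K p 0 := e0 _ _ hk hj
  have hm : ∀ i, i ≠ 0 → m i = 0 := fun i hi => by
    have : j.f i = 0 := (HomologicalComplex.isZero_single_obj_X _ _ _ _ hi).eq_of_src _ _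
    have h' : k.f i ≫ j.f i = 0 := by rw [this, comp_zero]
    exact h'
  have hzero : ∀ i j, j + 1 ≠ i → (tι K p i ≫ s i j ≫ tπ K p j : tX K p i ⟶ tX K p j) = 0 :=
    fun i j hij => by rw [hs i j hij, zero_comp, comp_zero]
  refine ⟨tr K p, fun n hn => isZero_tr K p n (by simp [p]; lia), Qm j, Qm k, ?_, ?_⟩
  · rw [← Functor.map_comp, ← CategoryTheory.Functor.map_id]
    symm
    refine HomotopyCategory.eq_of_homotopy _ _ ?_
    exact
     { hom := fun i j => tι K p i ≫ s i j ≫ tπ K p j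
       zero := fun i j hij => hzero i j hij
       comm := fun i => by
         rw [dNext_eq _ (show (ComplexShape.up ℤ).Rel i (i+1) by simp),
            prevD_eq _ (show (ComplexShape.up ℤ).Rel (i-1) i by simp)]
         change 𝟙 (tX K p i) = (tι K p i ≫ K.d i (i+1) ≫ tπ K p (i+1)) ≫
            tι K p (i+1) ≫ s (i+1) i ≫ tπ K p i +
            (tι K p i ≫ s i (i-1) ≫ tπ K p (i-1)) ≫ tι K p (i-1) ≫ K.d (i-1) i ≫ tπ K p i +
            m i
         rcases lt_trichotomy i 0 with hi | rfl | hi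
         · exact (isZero_tX K p i (by simp [p]; lia)).eq_of_src _ _
         · rw [tπ_zero K p (0-1) (by simp [p])]
           rw [hm0]
           simp only [Category.assoc]
           rw [tπ_tι_assoc K p (0+1) (by simp [p]), reassoc_of% h0]
           simp [tι_tπ]
         · rw [hm i (by lia)]
           simp only [Category.assoc]
           rw [tπ_tι_assoc K p (i+1) (by simp [p]; lia), tπ_tι_assoc K p (i-1) (by simp [p]; lia),
            add_zero, ← Preadditive.comp_add, ← Category.assoc (K.d _ _),
            ← Category.assoc (s _ _), ← Preadditive.add_comp, h, Category.id_comp, tι_tπ] }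
  · rw [← Functor.map_comp]
    congr 1
    ext
    rw [single_map_f_self]
    exact e1 _ _ hk hj

/-- The key splitting statement in nonpositive degrees. -/
lemma split_Hi_aux (K : CochainComplex B ℤ) (f : K.X 0 ⟶ K.X 0) (s : ∀ i j, K.X i ⟶ K.X j)
    (hs : ∀ i j, j + 1 ≠ i → s i j = 0)
    (h : ∀ i, K.d i (i + 1) ≫ s (i + 1) i + s i (i - 1) ≫ K.d (i - 1) i = 𝟙 _)
    (h0 : s 0 (0 - 1) ≫ K.d (0 - 1) 0 = 𝟙 _ - f) (hf : K.d (0 - 1) 0 ≫ f = 0) :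
    ∃ (L : CochainComplex B ℤ) (_ : ∀ n : ℤ, 0 < n → IsZero (L.X n))
      (j : Q ((single B (ComplexShape.up ℤ) 0).obj (K.X 0)) ⟶ Q L)
      (k : Q L ⟶ Q ((single B (ComplexShape.up ℤ) 0).obj (K.X 0))), k ≫ j = 𝟙 _ ∧
        j ≫ k = Qm ((single B (ComplexShape.up ℤ) 0).map f) := by
  let p : ℤ → Prop := fun n => n ≤ 0
  let j : (single B (ComplexShape.up ℤ) 0).obj (K.X 0) ⟶ tr K p :=
    mkHomFromSingle (tπ K p 0) (by
      rintro k hk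
      obtain rfl : 0 + 1 = k := hk
      exact (isZero_tr K p _ (by simp [p])).eq_of_tgt _ _)
  let k : tr K p ⟶ (single B (ComplexShape.up ℤ) 0).obj (K.X 0) :=
    mkHomToSingle (tι K p 0 ≫ f) (by
      rintro k hk
      have hk' : k + 1 = 0 := hk
      obtain rfl : k = 0 - 1 := by lia
      change (tι K p (0 - 1) ≫ K.d (0 - 1) 0 ≫ tπ K p 0) ≫ tι K p 0 ≫ f = 0
      simp only [Category.assoc]
      rw [tπ_tι_assoc K p 0 le_rfl, hf, comp_zero])
  let m : ∀ i, tX K p i ⟶ tX K p i := fun i => k.f i ≫ j.f i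
  let S := (single B (ComplexShape.up ℤ) 0).obj (K.X 0)
  let σ : S.X 0 ≅ K.X 0 := HomologicalComplex.singleObjXSelf _ _ _
  have e0 : ∀ (a : tX K p 0 ⟶ S.X 0) (b : S.X 0 ⟶ tX K p 0), a = (tι K p 0 ≫ f) ≫ σ.inv →
      b = σ.hom ≫ tπ K p 0 → a ≫ b = tι K p 0 ≫ f ≫ tπ K p 0 := by
    rintro a b rfl rfl
    simp
  have e1 : ∀ (a : tX K p 0 ⟶ S.X 0) (b : S.X 0 ⟶ tX K p 0), a = (tι K p 0 ≫ f) ≫ σ.inv →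
      b = σ.hom ≫ tπ K p 0 → b ≫ a = σ.hom ≫ f ≫ σ.inv := by
    rintro a b rfl rfl
    simp [tπ_tι_assoc K p 0 le_rfl]
  have hk : k.f 0 = (tι K p 0 ≫ f) ≫ σ.inv := HomologicalComplex.mkHomToSingle_f _ _
  have hj : j.f 0 = σ.hom ≫ tπ K p 0 := HomologicalComplex.mkHomFromSingle_f _ _
  have hm0 : m 0 = tι K p 0 ≫ f ≫ tπ K p 0 := e0 _ _ hk hj
  have hm : ∀ i, i ≠ 0 → m i = 0 := fun i hi => by
    have : j.f i = 0 := (HomologicalComplex.isZero_single_obj_X _ _ _ _ hi).eq_of_src _ _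
    have h' : k.f i ≫ j.f i = 0 := by rw [this, comp_zero]
    exact h'
  have hzero : ∀ i j, j + 1 ≠ i → (tι K p i ≫ s i j ≫ tπ K p j : tX K p i ⟶ tX K p j) = 0 :=
    fun i j hij => by rw [hs i j hij, zero_comp, comp_zero]
  refine ⟨tr K p, fun n hn => isZero_tr K p n (by simp [p]; lia), Qm j, Qm k, ?_, ?_⟩
  · rw [← Functor.map_comp, ← CategoryTheory.Functor.map_id]
    symm
    refine HomotopyCategory.eq_of_homotopy _ _ ?_
    exact
     { hom := fun i j => tι K p i ≫ s i j ≫ tπ K p j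
       zero := fun i j hij => hzero i j hij
       comm := fun i => by
         rw [dNext_eq _ (show (ComplexShape.up ℤ).Rel i (i+1) by simp),
            prevD_eq _ (show (ComplexShape.up ℤ).Rel (i-1) i by simp)]
         change 𝟙 (tX K p i) = (tι K p i ≫ K.d i (i+1) ≫ tπ K p (i+1)) ≫
            tι K p (i+1) ≫ s (i+1) i ≫ tπ K p i +
            (tι K p i ≫ s i (i-1) ≫ tπ K p (i-1)) ≫ tι K p (i-1) ≫ K.d (i-1) i ≫ tπ K p i +
            m i
         rcases lt_trichotomy i 0 with hi | rfl | hi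
         · rw [hm i (by lia)]
           simp only [Category.assoc]
           rw [tπ_tι_assoc K p (i+1) (by simp [p]; lia), tπ_tι_assoc K p (i-1) (by simp [p]; lia),
            add_zero, ← Preadditive.comp_add, ← Category.assoc (K.d _ _),
            ← Category.assoc (s _ _), ← Preadditive.add_comp, h, Category.id_comp, tι_tπ]
         · rw [tπ_zero K p (0+1) (by simp [p])]
           rw [hm0]
           simp only [Category.assoc]
           rw [tπ_tι_assoc K p (0-1) (by simp [p]), reassoc_of% h0]
           simp [tι_tπ]
         · exact (isZero_tX K p i (by simp [p]; lia)).eq_of_src _ _ }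
  · rw [← Functor.map_comp]
    congr 1
    ext
    rw [single_map_f_self]
    exact e1 _ _ hk hj

lemma per_homotopy {A : B} (g g' : A ⟶ A) (hg : g ≫ g' = 0) (hg' : g' ≫ g = 0)
    (hgg : g + g' = 𝟙 A) :
    ∃ s : ∀ i j : ℤ, (per g g' hg hg').X i ⟶ (per g g' hg hg').X j,
      (∀ i j, j + 1 ≠ i → s i j = 0) ∧
      (∀ i, (per g g' hg hg').d i (i + 1) ≫ s (i + 1) i +
        s i (i - 1) ≫ (per g g' hg hg').d (i - 1) i = 𝟙 _) ∧
      ((per g g' hg hg').d 0 (0 + 1) ≫ s (0 + 1) 0 = g) ∧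
      (s 0 (0 - 1) ≫ (per g g' hg hg').d (0 - 1) 0 = g') := by
  let s : ∀ i j : ℤ, A ⟶ A := fun i j => if j + 1 = i then 𝟙 A else 0
  refine ⟨s, fun i j hij => if_neg hij, fun i => ?_, ?_, ?_⟩
  · change (if i + 1 = i + 1 then (if Even i then g else g') else 0) ≫
      (if i + 1 = i + 1 then 𝟙 A else 0) + (if i - 1 + 1 = i then 𝟙 A else 0) ≫
      (if i - 1 + 1 = i then (if Even (i - 1) then g else g') else 0) = 𝟙 A
    rcases Int.even_or_odd i with hi | hi
    · simp [hi, hgg, Int.not_odd_iff_even.2 hi]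
    · simp [hi, hgg, Int.not_even_iff_odd.2 hi, add_comm g']
  · change (if (0 : ℤ) + 1 = 0 + 1 then (if Even (0 : ℤ) then g else g') else 0) ≫
      (if (0 : ℤ) + 1 = 0 + 1 then 𝟙 A else 0) = g
    simp
  · change (if (0 : ℤ) - 1 + 1 = 0 then 𝟙 A else 0) ≫
      (if (0 : ℤ) - 1 + 1 = 0 then (if Even ((0 : ℤ) - 1) then g else g') else 0) = g'
    simp

lemma split_Lo {A : B} (f : A ⟶ A) (hf : f ≫ f = f) :
    ∃ (L : CochainComplex B ℤ) (_ : ∀ n : ℤ, n < 0 → IsZero (L.X n))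
      (j : Q ((single B (ComplexShape.up ℤ) 0).obj A) ⟶ Q L)
      (k : Q L ⟶ Q ((single B (ComplexShape.up ℤ) 0).obj A)), k ≫ j = 𝟙 _ ∧
        j ≫ k = Qm ((single B (ComplexShape.up ℤ) 0).map f) := by
  have h1 : (𝟙 A - f) ≫ f = 0 := by simp [hf]
  have h2 : f ≫ (𝟙 A - f) = 0 := by simp [hf]
  obtain ⟨s, hs, h, h0, h0'⟩ := per_homotopy (𝟙 A - f) f h1 h2 (by simp)
  exact split_Lo_aux (per (𝟙 A - f) f h1 h2) f s hs h h0 (by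
    change f ≫ (if (0 : ℤ) + 1 = 0 + 1 then (if Even (0 : ℤ) then (𝟙 A - f) else f) else 0) = 0
    simp [hf])

lemma split_Hi {A : B} (f : A ⟶ A) (hf : f ≫ f = f) :
    ∃ (L : CochainComplex B ℤ) (_ : ∀ n : ℤ, 0 < n → IsZero (L.X n))
      (j : Q ((single B (ComplexShape.up ℤ) 0).obj A) ⟶ Q L)
      (k : Q L ⟶ Q ((single B (ComplexShape.up ℤ) 0).obj A)), k ≫ j = 𝟙 _ ∧
        j ≫ k = Qm ((single B (ComplexShape.up ℤ) 0).map f) := by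
  have h1 : (𝟙 A - f) ≫ f = 0 := by simp [hf]
  have h2 : f ≫ (𝟙 A - f) = 0 := by simp [hf]
  obtain ⟨s, hs, h, h0, h0'⟩ := per_homotopy f (𝟙 A - f) h2 h1 (by simp)
  exact split_Hi_aux (per f (𝟙 A - f) h2 h1) f s hs h h0' (by
    change (if (0 : ℤ) - 1 + 1 = 0 then (if Even ((0 : ℤ) - 1) then f else (𝟙 A - f)) else 0) ≫ f
      = 0
    simp [hf])

/-- A retract of an object of `B` is in both classes. -/
lemma retract_single {A : B} {W : HomotopyCategory B (ComplexShape.up ℤ)}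
    (i : W ⟶ Q ((single B (ComplexShape.up ℤ) 0).obj A))
    (r : Q ((single B (ComplexShape.up ℤ) 0).obj A) ⟶ W) (h : i ≫ r = 𝟙 W) :
    Lo 0 W ∧ Hi 0 W := by
  obtain ⟨f', hf'⟩ := (HomotopyCategory.quotient B (ComplexShape.up ℤ)).map_surjective (r ≫ i)
  obtain ⟨f, rfl⟩ := (single B (ComplexShape.up ℤ) 0).map_surjective f'
  have hf : f ≫ f = f := by
    apply single_faithful
    simp only [Functor.map_comp]
    rw [hf']
    simp only [Category.assoc, reassoc_of% h]
    exact hf'.symm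
  constructor
  · obtain ⟨L, hL, j, k, h1, h2⟩ := split_Lo f hf
    exact ⟨L, hL, iso_of_split i r h j k h1 (h2.trans hf')⟩
  · obtain ⟨L, hL, j, k, h1, h2⟩ := split_Hi f hf
    exact ⟨L, hL, iso_of_split i r h j k h1 (h2.trans hf')⟩

variable [HasBinaryBiproducts B]

lemma exists_trunc_triangle (X : HomotopyCategory B (ComplexShape.up ℤ)) (a : ℤ) :
    ∃ T : Triangle (HomotopyCategory B (ComplexShape.up ℤ)), T ∈ distTriang _ ∧ T.obj₂ = X ∧
      Lo a T.obj₁ ∧ Hi (a - 1) T.obj₃ := by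
  obtain ⟨K, rfl⟩ := HomotopyCategory.quotient_obj_surjective X
  have hp : ∀ i : ℤ, a ≤ i → a ≤ i + 1 := fun i hi => by lia
  refine ⟨CochainComplex.trianglehOfDegreewiseSplit (trS K (fun n => a ≤ n) hp) (trσ K _ hp), ?_, rfl,
    ⟨tr K (fun n => a ≤ n), fun n hn => isZero_tr _ _ _ (by lia), ⟨Iso.refl _⟩⟩,
    ⟨tr K (fun n => ¬ a ≤ n), fun n hn => isZero_tr _ _ _ (by lia), ⟨Iso.refl _⟩⟩⟩
  rw [HomotopyCategory.distinguished_iff_iso_trianglehOfDegreewiseSplit]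
  exact ⟨_, _, ⟨Iso.refl _⟩⟩

lemma exists_cone (T : Triangle (HomotopyCategory B (ComplexShape.up ℤ))) (hT : T ∈ distTriang _)
    {K L : CochainComplex B ℤ} (e₁ : T.obj₁ ≅ Q K) (e₂ : T.obj₂ ≅ Q L) :
    ∃ φ : K ⟶ L, Nonempty (T.obj₃ ≅ Q (CochainComplex.mappingCone φ)) := by
  obtain ⟨φ, hφ⟩ := (HomotopyCategory.quotient B (ComplexShape.up ℤ)).map_surjective
    (e₁.inv ≫ T.mor₁ ≫ e₂.hom)
  refine ⟨φ, ⟨Triangle.π₃.mapIso (isoTriangleOfIso₁₂ T _ hT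
    (HomotopyCategory.mappingCone_triangleh_distinguished φ) e₁ e₂ ?_)⟩⟩
  change T.mor₁ ≫ e₂.hom = e₁.hom ≫ (HomotopyCategory.quotient B (ComplexShape.up ℤ)).map φ
  rw [hφ]
  simp

lemma isZero_cone {K L : CochainComplex B ℤ} (φ : K ⟶ L) (n : ℤ) (h1 : IsZero (K.X (n + 1)))
    (h2 : IsZero (L.X n)) : IsZero ((CochainComplex.mappingCone φ).X n) := by
  rw [IsZero.iff_id_eq_zero, ← CochainComplex.mappingCone.id_X φ n (n + 1) rfl,
    h1.eq_of_tgt ((CochainComplex.mappingCone.fst φ).1.v n (n + 1) rfl) 0,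
    h2.eq_of_tgt ((CochainComplex.mappingCone.snd φ).v n n (add_zero n)) 0]
  simp

lemma cone_Lo (T : Triangle (HomotopyCategory B (ComplexShape.up ℤ))) (hT : T ∈ distTriang _)
    (a : ℤ) (h1 : Lo (a + 1) T.obj₁) (h2 : Lo a T.obj₂) : Lo a T.obj₃ := by
  obtain ⟨K, hK, ⟨e₁⟩⟩ := h1
  obtain ⟨L, hL, ⟨e₂⟩⟩ := h2
  obtain ⟨φ, e⟩ := exists_cone T hT e₁ e₂
  exact ⟨_, fun n hn => isZero_cone φ n (hK _ (by lia)) (hL _ (by lia)), e⟩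

lemma cone_Hi (T : Triangle (HomotopyCategory B (ComplexShape.up ℤ))) (hT : T ∈ distTriang _)
    (a : ℤ) (h1 : Hi (a + 1) T.obj₁) (h2 : Hi a T.obj₂) : Hi a T.obj₃ := by
  obtain ⟨K, hK, ⟨e₁⟩⟩ := h1
  obtain ⟨L, hL, ⟨e₂⟩⟩ := h2
  obtain ⟨φ, e⟩ := exists_cone T hT e₁ e₂
  exact ⟨_, fun n hn => isZero_cone φ n (hK _ (by lia)) (hL _ (by lia)), e⟩

lemma aux_Lo {D : Type*} [Category D] {W Y V A : D} (t : W ⟶ Y) (q : Y ⟶ W) (ht : 𝟙 W = t ≫ q)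
    (e : Y ⟶ Y) (h1 : e ≫ q = q) (v : Y ⟶ V) (u : V ⟶ Y) (hv : e = v ≫ u)
    (α : Y ⟶ A) (β : A ⟶ V) (hαβ : v = α ≫ β) : (t ≫ α) ≫ β ≫ u ≫ q = 𝟙 W := by
  rw [ht]
  conv_rhs => rw [← h1, hv, hαβ]
  simp only [Category.assoc]

lemma aux_Hi {D : Type*} [Category D] {W Y V A : D} (t : W ⟶ Y) (q : Y ⟶ W) (ht : 𝟙 W = t ≫ q)
    (e : Y ⟶ Y) (h1 : t ≫ e = t) (u : Y ⟶ V) (v : V ⟶ Y) (hv : e = u ≫ v)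
    (α : V ⟶ A) (β : A ⟶ Y) (hαβ : v = α ≫ β) : (t ≫ u ≫ α) ≫ β ≫ q = 𝟙 W := by
  rw [ht]
  conv_rhs => rw [← h1, hv, hαβ]
  simp only [Category.assoc]

lemma exists_retraction (T : Triangle (HomotopyCategory B (ComplexShape.up ℤ)))
    (hT : T ∈ distTriang _) (h : T.mor₃ = 0) :
    ∃ q : T.obj₂ ⟶ T.obj₁, 𝟙 T.obj₁ = T.mor₁ ≫ q := by
  have h0 : T.invRotate.mor₁ = 0 := by
    simp [Triangle.invRotate, h]
    rfl
  exact T.invRotate.yoneda_exact₂ (inv_rot_of_distTriang _ hT) (𝟙 T.obj₁) (by rw [h0]; exact zero_comp)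

lemma retract_Lo {X Y : HomotopyCategory B (ComplexShape.up ℤ)} (h : IsRetract X Y) (hY : Lo 0 Y) :
    Lo 0 X := by
  obtain ⟨i, r, hir⟩ := h
  obtain ⟨T, hT, rfl, hT1, hT3⟩ := exists_trunc_triangle X 0
  have hg : T.mor₂ = 0 := by
    rw [← Category.id_comp T.mor₂, ← hir, Category.assoc,
      orth (by lia) hY hT3 (r ≫ T.mor₂), comp_zero]
  -- section of `T.mor₁`
  obtain ⟨s, hs⟩ := T.coyoneda_exact₂ hT (𝟙 _) (by rw [hg, comp_zero])
  -- complete `s` to a triangle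
  obtain ⟨W', q, w, hW⟩ := distinguished_cocone_triangle s
  have hw : w = 0 := by
    have : Mono s := ⟨fun a b hab => by
      rw [← Category.comp_id a, ← Category.comp_id b, hs, reassoc_of% hab]⟩
    exact (Triangle.mk s q w).mor₃_eq_zero_of_mono₁ hW this
  obtain ⟨t, ht⟩ := (Triangle.mk s q w).coyoneda_exact₃ hW (𝟙 W') (by
    change 𝟙 W' ≫ w = 0
    rw [hw, comp_zero])
  replace ht : 𝟙 W' = t ≫ q := ht
  have hsq : s ≫ q = 0 := comp_distTriang_mor_zero₁₂ _ hW
  obtain ⟨v, hv⟩ := (T.invRotate).coyoneda_exact₂ (inv_rot_of_distTriang _ hT)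
    (𝟙 T.obj₁ - T.mor₁ ≫ s) (by
      change (𝟙 T.obj₁ - T.mor₁ ≫ s) ≫ T.mor₁ = 0
      rw [Preadditive.sub_comp, Category.assoc, ← hs]
      simp)
  have hWW : Hi 0 T.invRotate.obj₁ := hT3.shift (-1) 0 (by lia)
  obtain ⟨A, α, β, hαβ⟩ := factor hT1 hWW v
  have hret := retract_single (t ≫ α) (β ≫ T.invRotate.mor₁ ≫ q) (by
    have h1 : (𝟙 T.obj₁ - T.mor₁ ≫ s) ≫ q = q := by
      rw [Preadditive.sub_comp, Category.assoc, hsq]; simp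
    exact aux_Lo t q ht _ h1 v T.invRotate.mor₁ hv α β hαβ)
  have := cone_Lo _ (inv_rot_of_distTriang _ (inv_rot_of_distTriang _ hW)) 0
    (hT1.shift (-1) (0 + 1) (by lia)) ((hret.1.shift (-1) 1 (by lia)).mono (by lia))
  exact this

lemma retract_Hi {X Y : HomotopyCategory B (ComplexShape.up ℤ)} (h : IsRetract X Y) (hY : Hi 0 Y) :
    Hi 0 X := by
  obtain ⟨i, r, hir⟩ := h
  obtain ⟨T, hT, rfl, hT1, hT3⟩ := exists_trunc_triangle X 1
  have hg : T.mor₁ = 0 := by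
    rw [← Category.comp_id T.mor₁, ← hir, ← Category.assoc,
      orth (by lia) hT1 hY (T.mor₁ ≫ i), zero_comp]
  -- retraction of `T.mor₂`
  obtain ⟨f, hf⟩ := T.yoneda_exact₂ hT (𝟙 _) (by rw [hg, zero_comp])
  -- complete `f` to a triangle
  obtain ⟨W', t, w, hW⟩ := distinguished_cocone_triangle₁ f
  have hw : w = 0 := by
    have : Epi f := ⟨fun a b hab => by
      rw [← Category.id_comp a, ← Category.id_comp b, hf, Category.assoc, hab, Category.assoc]⟩
    exact (Triangle.mk t f w).mor₃_eq_zero_of_epi₂ hW this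
  have htf : t ≫ f = 0 := comp_distTriang_mor_zero₁₂ _ hW
  obtain ⟨q, hq⟩ : ∃ q : T.obj₃ ⟶ W', 𝟙 W' = t ≫ q := exists_retraction (Triangle.mk t f w) hW hw
  obtain ⟨v, hv⟩ := T.rotate.yoneda_exact₂ (rot_of_distTriang _ hT)
    (𝟙 T.obj₃ - f ≫ T.mor₂) (by
      change T.mor₂ ≫ (𝟙 T.obj₃ - f ≫ T.mor₂) = 0
      rw [Preadditive.comp_sub, ← Category.assoc, ← hf]
      simp)
  have hWW : Lo 0 T.rotate.obj₃ := hT1.shift 1 0 (by lia)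
  have hT3' : Hi 0 T.obj₃ := hT3
  obtain ⟨A, α, β, hαβ⟩ := factor hWW hT3' v
  have hret := retract_single (t ≫ T.rotate.mor₂ ≫ α) (β ≫ q) (by
    have h1 : t ≫ (𝟙 T.obj₃ - f ≫ T.mor₂) = t := by
      rw [Preadditive.comp_sub, ← Category.assoc t f, htf]; simp
    exact aux_Hi t q hq _ h1 T.rotate.mor₂ v hv α β hαβ)
  exact cone_Hi _ hW 0 (hret.2.mono (by lia)) hT3'

end

end StupidWeight

theorem stmt_9 (B : Type u₂) [Category.{v₂} B] [Preadditive B] [HasZeroObject B]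
    [HasBinaryBiproducts B] :
    ∃ w : WeightStructure (HomotopyCategory B (ComplexShape.up ℤ)),
      w.LE = {X : HomotopyCategory B (ComplexShape.up ℤ) |
        ∃ Y : CochainComplex B ℤ, (∀ n : ℤ, n < 0 → IsZero (Y.X n)) ∧
          Nonempty (X ≅ (HomotopyCategory.quotient B (ComplexShape.up ℤ)).obj Y)} ∧
      w.GE = {X : HomotopyCategory B (ComplexShape.up ℤ) |
        ∃ Y : CochainComplex B ℤ, (∀ n : ℤ, 0 < n → IsZero (Y.X n)) ∧
          Nonempty (X ≅ (HomotopyCategory.quotient B (ComplexShape.up ℤ)).obj Y)} := by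
  refine ⟨{ LE := {X | StupidWeight.Lo 0 X}
            GE := {X | StupidWeight.Hi 0 X}
            retract_mem_LE := fun X Y h hY => StupidWeight.retract_Lo h hY
            retract_mem_GE := fun X Y h hY => StupidWeight.retract_Hi h hY
            shift_LE := fun X hX => (StupidWeight.Lo.shift hX (-1) 1 (by lia)).mono (by lia)
            shift_GE := fun X hX => (StupidWeight.Hi.shift hX 1 (-1) (by lia)).mono (by lia)
            orthogonal := fun X Y hX hY f =>
              StupidWeight.orth (by lia) hX (StupidWeight.Hi.shift hY 1 (-1) (by lia)) f
            exists_decomp := fun M => ?_ }, rfl, rfl⟩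
  obtain ⟨T, hT, rfl, h1, h3⟩ := StupidWeight.exists_trunc_triangle M 0
  exact ⟨T.obj₁, T.obj₃, T.mor₁, T.mor₂, T.mor₃, hT, h1, h3.shift (-1) 0 (by lia)⟩
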